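/- Assume m ≥ 2. Define θ_0 = 1, θ_n = Σ_{i=1}^n θ_{i−1} √(a_{i,n}) for n = 1, …, m−1, ā_{i,m} = sup_{p ∈ ℕ} ( β_{i,m,p}² + β̃_{i,m,p}² ), and θ̄_m = Σ_{i=1}^m θ_{i−1} √(ā_{i,m}). Let α ∈ [1/2, 1], set γ_α = 2^m (1 − α), and define b̄_α = (1/2) sup_{p ∈ ℕ} ( (β_{1,m,p} − γ_α)² + β̃_{1,m,p}² + γ_α² + √( ( (β_{1,m,p} − γ_α)² + β̃_{1,m,p}² + γ_α² )² − 4 (β_{1,m,p} − γ_α)² γ_α² ) ). Let Ū_m(x, b) = W_m x + λ_m b and define the network N : H × H → H × H by N = (x, b) ↦ ( R_m ( Ū_m ( (Q_{m−1} ∘ U_{m−1} ∘ ⋯ ∘ Q_1 ∘ U_1)(x, b) ) ), 0 ). If √(b̄_α) − √(ā_{1,m}) ≤ 2^m α − 2 θ̄_m, then N is α-averaged. -/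

import Mathlib

/-!
Write `Sₙ = 2 Qₙ - Id`, which is nonexpansive because `Rₙ` is firmly nonexpansive
(`norm_reflection_le`). Fix two inputs and let `xₙ` be the difference of the two states after layer
`n`. With the defects `s₀ = x₀`, `sₙ = 2ⁿ xₙ - Uₙ (2ⁿ⁻¹ xₙ₋₁)`, unrolling the recursion gives
`Uₙ (2ⁿ⁻¹ xₙ₋₁) = ∑_{i ≤ n} Uₙ ⋯ Uᵢ sᵢ₋₁` (`unroll`), and nonexpansiveness of `Sₙ` gives
`‖sₙ‖ ≤ ‖Uₙ (2ⁿ⁻¹ xₙ₋₁)‖`. Hence `‖sₙ‖ ≤ θₙ ‖x₀‖` once `‖Uₙ ⋯ Uᵢ‖ ≤ √a_{i,n}`.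

Multiplying the difference of the outputs minus `(1 - α) x₀` by `2ᵐ`, three contributions remain: the
linear term `i = 1` shifted by `γ_α`, bounded by `√b̄_α`; the terms `i ≥ 2`, bounded by
`θ̄ₘ - √ā_{1,m}`; and the last reflection, bounded by `θ̄ₘ`. The hypothesis says that they add up to
at most `2ᵐ α`.

The operator bounds are coordinatewise: in the basis `v`, `Uₙ ⋯ Uᵢ` acts on the pair of `p`-th
coordinates as the triangular matrix with rows `(β_{i,n,p}, β̃_{i,n,p})` and `(0, η_{i,n})`
(`inner_fstL_opComp`, `sndL_opComp`), whose squared norm is given by `norm_sq_two_by_two`.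
-/

noncomputable section

open Finset

variable {H : Type*} [NormedAddCommGroup H] [InnerProductSpace ℝ H]

/-- Build the pair `(x, b)` in the `ℓ²` product space `H × H`. -/
def mkP (x b : H) : WithLp 2 (H × H) := (WithLp.equiv 2 (H × H)).symm (x, b)

/-- First component of an element of the product space. -/
def fstP (z : WithLp 2 (H × H)) : H := (WithLp.equiv 2 (H × H) z).1

/-- Second component of an element of the product space. -/
def sndP (z : WithLp 2 (H × H)) : H := (WithLp.equiv 2 (H × H) z).2

/-- `(x, b) ↦ x` as a continuous linear map on the `ℓ²` product. -/
def fstL : WithLp 2 (H × H) →L[ℝ] H :=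
  (ContinuousLinearMap.fst ℝ H H).comp
    (WithLp.prodContinuousLinearEquiv 2 ℝ H H).toContinuousLinearMap

/-- `(x, b) ↦ b` as a continuous linear map on the `ℓ²` product. -/
def sndL : WithLp 2 (H × H) →L[ℝ] H :=
  (ContinuousLinearMap.snd ℝ H H).comp
    (WithLp.prodContinuousLinearEquiv 2 ℝ H H).toContinuousLinearMap

/-- `Uₙ(x, b) = (Wₙ x + λₙ b, ηₙ b)` as a continuous linear map on the product space. -/
def Uop (W : ℕ → H →L[ℝ] H) (lam eta : ℕ → ℝ) (n : ℕ) :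
    WithLp 2 (H × H) →L[ℝ] WithLp 2 (H × H) :=
  ((WithLp.prodContinuousLinearEquiv 2 ℝ H H).symm.toContinuousLinearMap).comp
    (((((W n).comp (ContinuousLinearMap.fst ℝ H H)) + lam n • (ContinuousLinearMap.snd ℝ H H)).prod
        (eta n • (ContinuousLinearMap.snd ℝ H H))).comp
      (WithLp.prodContinuousLinearEquiv 2 ℝ H H).toContinuousLinearMap)

/-- Composition `Aₙ ∘ ⋯ ∘ Aᵢ` (the identity when `n < i`, i.e. when the composition is empty). -/
def opComp {E : Type*} [NormedAddCommGroup E] [NormedSpace ℝ E]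
    (A : ℕ → E →L[ℝ] E) (i : ℕ) : ℕ → (E →L[ℝ] E)
  | 0 => 1
  | n + 1 => if n + 1 < i then 1 else (A (n + 1)).comp (opComp A i n)

/-- `η_{i,j} = η_j ⋯ η_i` if `j ≥ i`, and `1` otherwise. -/
def etaP (eta : ℕ → ℝ) (i j : ℕ) : ℝ := ∏ k ∈ Finset.Icc i j, eta k

/-- `β_{i,n,p} = ∏_{j=i}^n β_p^{(j)}`. -/
def betaC (beta : ℕ → ℕ → ℝ) (i n p : ℕ) : ℝ := ∏ j ∈ Finset.Icc i n, beta j p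

/-- `β̃_{i,n,p} = Σ_{j=i}^{n−1} (∏_{l=j+1}^n β_p^{(l)}) λ_j η_{i,j−1} + λ_n η_{i,n−1}`. -/
def betaT (beta : ℕ → ℕ → ℝ) (lam eta : ℕ → ℝ) (i n p : ℕ) : ℝ :=
  (∑ j ∈ Finset.Icc i (n - 1), (∏ l ∈ Finset.Icc (j + 1) n, beta l p) * lam j * etaP eta i (j - 1))
    + lam n * etaP eta i (n - 1)

/-- The operator `W̃_{i,n} = Σ_{j=i}^{n−1} λ_j η_{i,j−1} (Wₙ ∘ ⋯ ∘ W_{j+1}) + λ_n η_{i,n−1} Id`. -/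
def Wt (W : ℕ → H →L[ℝ] H) (lam eta : ℕ → ℝ) (i n : ℕ) : H →L[ℝ] H :=
  (∑ j ∈ Finset.Icc i (n - 1), (lam j * etaP eta i (j - 1)) • opComp W (j + 1) n)
    + (lam n * etaP eta i (n - 1)) • (1 : H →L[ℝ] H)

/-- `a_{i,n}`. -/
def aC (beta : ℕ → ℕ → ℝ) (lam eta : ℕ → ℝ) (i n : ℕ) : ℝ :=
  (1 / 2) * ⨆ p : ℕ,
    (betaC beta i n p ^ 2 + betaT beta lam eta i n p ^ 2 + etaP eta i n ^ 2
      + Real.sqrt ((betaC beta i n p ^ 2 + betaT beta lam eta i n p ^ 2 + etaP eta i n ^ 2) ^ 2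
          - 4 * betaC beta i n p ^ 2 * etaP eta i n ^ 2))

/-- `ā_{i,n} = sup_p (β_{i,n,p}² + β̃_{i,n,p}²)`. -/
def aBar (beta : ℕ → ℕ → ℝ) (lam eta : ℕ → ℝ) (i n : ℕ) : ℝ :=
  ⨆ p : ℕ, (betaC beta i n p ^ 2 + betaT beta lam eta i n p ^ 2)

/-- `Qₙ(x, b) = (Rₙ x, b)`. -/
def Qop (R : ℕ → H → H) (n : ℕ) (z : WithLp 2 (H × H)) : WithLp 2 (H × H) :=
  mkP (R n (fstP z)) (sndP z)

/-- The virtual network `Qₙ ∘ Uₙ ∘ ⋯ ∘ Q₁ ∘ U₁`. -/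
def net (U : ℕ → WithLp 2 (H × H) →L[ℝ] WithLp 2 (H × H))
    (Q : ℕ → WithLp 2 (H × H) → WithLp 2 (H × H)) :
    ℕ → (WithLp 2 (H × H) → WithLp 2 (H × H))
  | 0 => id
  | n + 1 => fun z => Q (n + 1) (U (n + 1) (net U Q n z))

/-- `Ū_m (x, b) = W_m x + λ_m b` as a continuous linear map to `H`. -/
def Ubar (W : ℕ → H →L[ℝ] H) (lam : ℕ → ℝ) (m : ℕ) : WithLp 2 (H × H) →L[ℝ] H :=
  ((W m).comp fstL) + lam m • sndL

/-- `Û₁ b = (λ₁ b, η₁ b)`. -/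
def Uhat1a (lam eta : ℕ → ℝ) : H →L[ℝ] WithLp 2 (H × H) :=
  ((WithLp.prodContinuousLinearEquiv 2 ℝ H H).symm.toContinuousLinearMap).comp
    ((lam 1 • (1 : H →L[ℝ] H)).prod (eta 1 • (1 : H →L[ℝ] H)))

/-- `Û₁ b = (W₁ b + λ₁ b, η₁ b)`. -/
def Uhat1b (W : ℕ → H →L[ℝ] H) (lam eta : ℕ → ℝ) : H →L[ℝ] WithLp 2 (H × H) :=
  ((WithLp.prodContinuousLinearEquiv 2 ℝ H H).symm.toContinuousLinearMap).comp
    ((W 1 + lam 1 • (1 : H →L[ℝ] H)).prod (eta 1 • (1 : H →L[ℝ] H)))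

/-- The chain `Qₙ ∘ Uₙ ∘ ⋯ ∘ Q₂ ∘ U₂ ∘ Q₁ ∘ Û₁` (for `n ≥ 1`), fed with an input in `H`. -/
def midNet (U : ℕ → WithLp 2 (H × H) →L[ℝ] WithLp 2 (H × H))
    (Q : ℕ → WithLp 2 (H × H) → WithLp 2 (H × H)) (U1 : H → WithLp 2 (H × H)) :
    ℕ → (H → WithLp 2 (H × H))
  | 0 => U1
  | 1 => fun b => Q 1 (U1 b)
  | n + 2 => fun b => Q (n + 2) (U (n + 2) (midNet U Q U1 (n + 1) b))

/-- The squared operator norm of the matrix with rows `(c, d)` and `(0, e)` is at most the larger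
root of `k² - (c² + d² + e²) k + c² e² = 0`. -/
lemma norm_sq_two_by_two (c d e x b : ℝ) :
    (c * x + d * b) ^ 2 + (e * b) ^ 2 ≤
      (1 / 2) * (c ^ 2 + d ^ 2 + e ^ 2 +
        Real.sqrt ((c ^ 2 + d ^ 2 + e ^ 2) ^ 2 - 4 * c ^ 2 * e ^ 2)) * (x ^ 2 + b ^ 2) := by
  have hdisc : 0 ≤ (c ^ 2 + d ^ 2 + e ^ 2) ^ 2 - 4 * c ^ 2 * e ^ 2 := by
    nlinarith [sq_nonneg (c ^ 2 - e ^ 2), mul_nonneg (sq_nonneg d) (sq_nonneg c),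
      mul_nonneg (sq_nonneg d) (sq_nonneg e), sq_nonneg (d ^ 2)]
  have hs := Real.sq_sqrt hdisc
  have hs0 := Real.sqrt_nonneg ((c ^ 2 + d ^ 2 + e ^ 2) ^ 2 - 4 * c ^ 2 * e ^ 2)
  set s := Real.sqrt ((c ^ 2 + d ^ 2 + e ^ 2) ^ 2 - 4 * c ^ 2 * e ^ 2)
  -- `P` and `Q` are the diagonal entries of the quadratic form of `k Id - Mᵀ M`, which is singular.
  obtain ⟨P, hP⟩ : ∃ P, P = (1 / 2) * (c ^ 2 + d ^ 2 + e ^ 2 + s) - c ^ 2 := ⟨_, rfl⟩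
  obtain ⟨Q, hQ⟩ : ∃ Q, Q = (1 / 2) * (c ^ 2 + d ^ 2 + e ^ 2 + s) - d ^ 2 - e ^ 2 := ⟨_, rfl⟩
  have hdet : P * Q = (c * d) ^ 2 := by
    rw [hP, hQ]; linear_combination (1 / 4) * hs
  have hsum : 0 ≤ P + Q := by rw [hP, hQ]; linarith
  have hform : 0 ≤ P * x ^ 2 - 2 * (c * d) * x * b + Q * b ^ 2 := by
    rcases hsum.lt_or_eq with h | h
    · have hprod : 0 ≤ (P + Q) * (P * x ^ 2 - 2 * (c * d) * x * b + Q * b ^ 2) := by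
        have : (P + Q) * (P * x ^ 2 - 2 * (c * d) * x * b + Q * b ^ 2)
            = (P * x - c * d * b) ^ 2 + (Q * b - c * d * x) ^ 2 := by
          linear_combination (b ^ 2 + x ^ 2) * hdet
        rw [this]; positivity
      exact nonneg_of_mul_nonneg_right hprod h
    · have hQP : Q = -P := by linarith
      rw [hQP] at hdet
      have hP0 : P = 0 := by nlinarith [sq_nonneg P, sq_nonneg (c * d)]
      have hcd : c * d = 0 := by
        rw [hP0] at hdet
        exact pow_eq_zero_iff (two_ne_zero) |>.1 (by linarith)
      rw [hQP, hP0, hcd]; simp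
  rw [hP, hQ] at hform
  linarith

lemma sq_row_le (c d x b : ℝ) :
    (c * x + d * b) ^ 2 ≤ (c ^ 2 + d ^ 2) * (x ^ 2 + b ^ 2) := by
  nlinarith [sq_nonneg (c * b - d * x)]

lemma two_by_two_le_two_mul (c d e : ℝ) :
    c ^ 2 + d ^ 2 + e ^ 2 + Real.sqrt ((c ^ 2 + d ^ 2 + e ^ 2) ^ 2 - 4 * c ^ 2 * e ^ 2)
      ≤ 2 * (c ^ 2 + d ^ 2 + e ^ 2) := by
  have : Real.sqrt ((c ^ 2 + d ^ 2 + e ^ 2) ^ 2 - 4 * c ^ 2 * e ^ 2) ≤ c ^ 2 + d ^ 2 + e ^ 2 := by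
    apply Real.sqrt_le_iff.2
    constructor
    · positivity
    · have : 0 ≤ 4 * c ^ 2 * e ^ 2 := by positivity
      linarith
  linarith

/-! ### Coordinates in the Hilbert basis -/

lemma hasSum_inner_sq (v : HilbertBasis ℕ ℝ H) (x : H) :
    HasSum (fun p => (inner ℝ (v p) x) ^ 2) (‖x‖ ^ 2) := by
  have h := v.hasSum_inner_mul_inner x x
  rw [real_inner_self_eq_norm_sq] at h
  have e : (fun p => (inner ℝ (v p) x : ℝ) ^ 2) = fun p => inner ℝ x (v p) * inner ℝ (v p) x :=
    funext fun p => by rw [sq, real_inner_comm x (v p)]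
  rwa [e]

lemma norm_sq_le_of_coord (v : HilbertBasis ℕ ℝ H) (A : ℝ) (x b y w : H)
    (h : ∀ p, (inner ℝ (v p) y) ^ 2 + (inner ℝ (v p) w) ^ 2
      ≤ A * ((inner ℝ (v p) x) ^ 2 + (inner ℝ (v p) b) ^ 2)) :
    ‖y‖ ^ 2 + ‖w‖ ^ 2 ≤ A * (‖x‖ ^ 2 + ‖b‖ ^ 2) :=
  hasSum_le h ((hasSum_inner_sq v y).add (hasSum_inner_sq v w))
    (((hasSum_inner_sq v x).add (hasSum_inner_sq v b)).mul_left A)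

lemma inner_diag (v : HilbertBasis ℕ ℝ H) (T : H →L[ℝ] H) (c : ℕ → ℝ)
    (hT : ∀ p, T (v p) = c p • v p) (p : ℕ) (x : H) :
    inner ℝ (v p) (T x) = c p * inner ℝ (v p) x := by
  have h1 := (v.hasSum_repr x).mapL ((innerSL ℝ (v p)).comp T)
  have h2 := ((v.hasSum_repr x).mapL (innerSL ℝ (v p))).mul_left (c p)
  simp only [ContinuousLinearMap.comp_apply, map_smul, hT, innerSL_apply_apply] at h1 h2
  have e : (fun q => (v.repr x) q • c q • (inner ℝ (v p) (v q) : ℝ))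
      = fun q => c p * (v.repr x) q • (inner ℝ (v p) (v q) : ℝ) := by
    funext q
    rcases eq_or_ne p q with rfl | hpq
    · simp only [smul_eq_mul]; ring
    · simp [v.orthonormal.2 hpq]
  rw [e] at h1
  exact h1.unique h2

lemma abs_diag_le (v : HilbertBasis ℕ ℝ H) (T : H →L[ℝ] H) (c : ℕ → ℝ)
    (hT : ∀ p, T (v p) = c p • v p) (p : ℕ) : |c p| ≤ ‖T‖ := by
  have h := T.le_opNorm (v p)
  rwa [hT, norm_smul, v.orthonormal.1 p, mul_one, mul_one, Real.norm_eq_abs] at h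

/-! ### The product space and the layers -/

lemma norm_sq_P (z : WithLp 2 (H × H)) : ‖z‖ ^ 2 = ‖fstL z‖ ^ 2 + ‖sndL z‖ ^ 2 :=
  WithLp.prod_norm_sq_eq_of_L2 z

@[simp] lemma fstL_mkP (x b : H) : fstL (mkP x b) = x := rfl
@[simp] lemma sndL_mkP (x b : H) : sndL (mkP x b) = b := rfl

lemma ext_P {z w : WithLp 2 (H × H)} (h1 : fstL z = fstL w) (h2 : sndL z = sndL w) : z = w := by
  apply (WithLp.equiv 2 (H × H)).injective
  exact Prod.ext h1 h2

lemma fstL_Uop (W : ℕ → H →L[ℝ] H) (lam eta : ℕ → ℝ) (n : ℕ) (z : WithLp 2 (H × H)) :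
    fstL (Uop W lam eta n z) = W n (fstL z) + lam n • sndL z := rfl

lemma sndL_Uop (W : ℕ → H →L[ℝ] H) (lam eta : ℕ → ℝ) (n : ℕ) (z : WithLp 2 (H × H)) :
    sndL (Uop W lam eta n z) = eta n • sndL z := rfl

lemma Ubar_eq (W : ℕ → H →L[ℝ] H) (lam eta : ℕ → ℝ) (n : ℕ) (z : WithLp 2 (H × H)) :
    Ubar W lam n z = fstL (Uop W lam eta n z) := rfl

lemma opComp_of_lt {E : Type*} [NormedAddCommGroup E] [NormedSpace ℝ E]
    (A : ℕ → E →L[ℝ] E) {i n : ℕ} (h : n < i) : opComp A i n = 1 := by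
  cases n with
  | zero => rfl
  | succ n => simp [opComp, h]

lemma opComp_succ {E : Type*} [NormedAddCommGroup E] [NormedSpace ℝ E]
    (A : ℕ → E →L[ℝ] E) {i n : ℕ} (h : i ≤ n + 1) (z : E) :
    opComp A i (n + 1) z = A (n + 1) (opComp A i n z) := by
  simp [opComp, Nat.not_lt.2 h]

lemma opComp_self {E : Type*} [NormedAddCommGroup E] [NormedSpace ℝ E]
    (A : ℕ → E →L[ℝ] E) {i : ℕ} (hi : 1 ≤ i) (z : E) : opComp A i i z = A i z := by
  obtain ⟨k, rfl⟩ := Nat.exists_eq_add_of_le' hi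
  rw [opComp_succ A le_rfl, opComp_of_lt A (Nat.lt_succ_self k)]
  rfl

lemma betaC_succ (beta : ℕ → ℕ → ℝ) {i n : ℕ} (p : ℕ) (h : i ≤ n + 1) :
    betaC beta i (n + 1) p = beta (n + 1) p * betaC beta i n p := by
  rw [betaC, betaC, Finset.prod_Icc_succ_top h, mul_comm]

lemma etaP_succ (eta : ℕ → ℝ) {i n : ℕ} (h : i ≤ n + 1) :
    etaP eta i (n + 1) = eta (n + 1) * etaP eta i n := by
  rw [etaP, etaP, Finset.prod_Icc_succ_top h, mul_comm]

lemma betaT_self (beta : ℕ → ℕ → ℝ) (lam eta : ℕ → ℝ) {i : ℕ} (p : ℕ) (hi : 1 ≤ i) :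
    betaT beta lam eta i i p = lam i := by
  have h : Finset.Icc i (i - 1) = ∅ := Finset.Icc_eq_empty (by omega)
  simp [betaT, etaP, h]

lemma betaT_succ (beta : ℕ → ℕ → ℝ) (lam eta : ℕ → ℝ) {i n : ℕ} (p : ℕ) (hi : 1 ≤ i)
    (h : i ≤ n) :
    betaT beta lam eta i (n + 1) p
      = beta (n + 1) p * betaT beta lam eta i n p + lam (n + 1) * etaP eta i n := by
  obtain ⟨k, rfl⟩ := Nat.exists_eq_add_of_le' (hi.trans h)
  simp only [betaT, Nat.add_sub_cancel]
  rw [Finset.sum_Icc_succ_top h, mul_add, Finset.mul_sum]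
  have h1 : ∀ j ∈ Finset.Icc i k,
      (∏ l ∈ Finset.Icc (j + 1) (k + 1 + 1), beta l p) * lam j * etaP eta i (j - 1)
      = beta (k + 1 + 1) p *
        ((∏ l ∈ Finset.Icc (j + 1) (k + 1), beta l p) * lam j * etaP eta i (j - 1)) := by
    intro j hj
    rw [Finset.mem_Icc] at hj
    rw [Finset.prod_Icc_succ_top (by omega)]
    ring
  rw [Finset.sum_congr rfl h1]
  simp only [Finset.Icc_self, Finset.prod_singleton, Nat.add_sub_cancel]
  ring

lemma sndL_opComp (W : ℕ → H →L[ℝ] H) (lam eta : ℕ → ℝ) {i n : ℕ} (hi : 1 ≤ i) (hin : i ≤ n)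
    (z : WithLp 2 (H × H)) :
    sndL (opComp (Uop W lam eta) i n z) = etaP eta i n • sndL z := by
  induction n, hin using Nat.le_induction with
  | base => rw [opComp_self _ hi, sndL_Uop]; simp [etaP]
  | succ n hn ih =>
    rw [opComp_succ _ (by omega), sndL_Uop, ih, smul_smul, etaP_succ _ (by omega)]

lemma inner_fstL_opComp {m : ℕ} (v : HilbertBasis ℕ ℝ H) (W : ℕ → H →L[ℝ] H)
    (beta : ℕ → ℕ → ℝ) (lam eta : ℕ → ℝ)
    (hW : ∀ n, 1 ≤ n → n ≤ m → ∀ p : ℕ, W n (v p) = beta n p • v p)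
    {i n : ℕ} (hi : 1 ≤ i) (hin : i ≤ n) (hnm : n ≤ m) (z : WithLp 2 (H × H)) (p : ℕ) :
    inner ℝ (v p) (fstL (opComp (Uop W lam eta) i n z))
      = betaC beta i n p * inner ℝ (v p) (fstL z)
        + betaT beta lam eta i n p * inner ℝ (v p) (sndL z) := by
  induction n, hin using Nat.le_induction with
  | base =>
    rw [opComp_self _ hi, fstL_Uop, inner_add_right, inner_diag v _ _ (hW i hi hnm),
      real_inner_smul_right, betaT_self _ _ _ _ hi]
    simp [betaC]
  | succ n hn ih =>
    rw [opComp_succ _ (by omega), fstL_Uop, inner_add_right,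
      inner_diag v _ _ (hW (n + 1) (by omega) hnm), real_inner_smul_right, ih (by omega),
      sndL_opComp _ _ _ hi hn, real_inner_smul_right, betaC_succ _ _ (by omega),
      betaT_succ _ _ _ _ hi hn]
    ring

/-! ### Boundedness of the coordinate sequences and operator bounds -/

/-- A real sequence that is bounded in absolute value. -/
def BddSeq (f : ℕ → ℝ) : Prop := ∃ C, ∀ p, |f p| ≤ C

lemma BddSeq.const (c : ℝ) : BddSeq (fun _ => c) := ⟨|c|, fun _ => le_rfl⟩

lemma BddSeq.add {f g : ℕ → ℝ} (hf : BddSeq f) (hg : BddSeq g) : BddSeq (fun p => f p + g p) := by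
  obtain ⟨C, hC⟩ := hf
  obtain ⟨D, hD⟩ := hg
  exact ⟨C + D, fun p => (abs_add_le _ _).trans (add_le_add (hC p) (hD p))⟩

lemma BddSeq.mul {f g : ℕ → ℝ} (hf : BddSeq f) (hg : BddSeq g) : BddSeq (fun p => f p * g p) := by
  obtain ⟨C, hC⟩ := hf
  obtain ⟨D, hD⟩ := hg
  refine ⟨C * D, fun p => ?_⟩
  rw [abs_mul]
  exact mul_le_mul (hC p) (hD p) (abs_nonneg _) ((abs_nonneg _).trans (hC p))

lemma BddSeq.sq {f : ℕ → ℝ} (hf : BddSeq f) : BddSeq (fun p => f p ^ 2) := by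
  simpa only [pow_two] using hf.mul hf

lemma BddSeq.bddAbove {f : ℕ → ℝ} (hf : BddSeq f) : BddAbove (Set.range f) := by
  obtain ⟨C, hC⟩ := hf
  exact ⟨C, by rintro _ ⟨p, rfl⟩; exact (le_abs_self _).trans (hC p)⟩

lemma bddSeq_betaC_betaT {m : ℕ} (beta : ℕ → ℕ → ℝ) (lam eta : ℕ → ℝ)
    (hb : ∀ n, 1 ≤ n → n ≤ m → BddSeq (beta n))
    {i n : ℕ} (hi : 1 ≤ i) (hin : i ≤ n) (hnm : n ≤ m) :
    BddSeq (betaC beta i n) ∧ BddSeq (betaT beta lam eta i n) := by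
  induction n, hin using Nat.le_induction with
  | base =>
    constructor
    · obtain ⟨C, hC⟩ := hb i hi hnm
      exact ⟨C, fun p => by simpa [betaC] using hC p⟩
    · exact ⟨|lam i|, fun p => by rw [betaT_self _ _ _ _ hi]⟩
  | succ n hn ih =>
    obtain ⟨h1, h2⟩ := ih (by omega)
    have hb' := hb (n + 1) (by omega) hnm
    constructor
    · rw [show betaC beta i (n + 1) = _ from funext fun p => betaC_succ _ p (by omega)]
      exact hb'.mul h1
    · rw [show betaT beta lam eta i (n + 1) = _ from funext fun p => betaT_succ _ _ _ p hi hn]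
      exact (hb'.mul h2).add (BddSeq.const _)

/-- Coordinatewise triangular maps with bounded entries have norm at most the square root of half
the supremum occurring in `aC` and in `b̄_α`. -/
lemma norm_triangular_le (v : HilbertBasis ℕ ℝ H) (c d : ℕ → ℝ) (e : ℝ)
    (hc : BddSeq c) (hd : BddSeq d) (z w : WithLp 2 (H × H))
    (h1 : ∀ p, inner ℝ (v p) (fstL w) = c p * inner ℝ (v p) (fstL z)
      + d p * inner ℝ (v p) (sndL z))
    (h2 : ∀ p, (inner ℝ (v p) (sndL w)) ^ 2 = (e * inner ℝ (v p) (sndL z)) ^ 2) :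
    ‖w‖ ≤ Real.sqrt ((1 / 2) * ⨆ p : ℕ, (c p ^ 2 + d p ^ 2 + e ^ 2 +
        Real.sqrt ((c p ^ 2 + d p ^ 2 + e ^ 2) ^ 2 - 4 * c p ^ 2 * e ^ 2))) * ‖z‖ := by
  have hbdd : BddAbove (Set.range fun p : ℕ => (c p ^ 2 + d p ^ 2 + e ^ 2 +
        Real.sqrt ((c p ^ 2 + d p ^ 2 + e ^ 2) ^ 2 - 4 * c p ^ 2 * e ^ 2))) := by
    obtain ⟨C, hC⟩ := ((BddSeq.const 2).mul ((hc.sq.add hd.sq).add (BddSeq.const (e ^ 2)))).bddAbove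
    refine ⟨C, ?_⟩
    rintro _ ⟨p, rfl⟩
    exact (two_by_two_le_two_mul _ _ _).trans (hC ⟨p, rfl⟩)
  have key : ‖w‖ ^ 2 ≤ ((1 / 2) * ⨆ p : ℕ, (c p ^ 2 + d p ^ 2 + e ^ 2 +
        Real.sqrt ((c p ^ 2 + d p ^ 2 + e ^ 2) ^ 2 - 4 * c p ^ 2 * e ^ 2))) * ‖z‖ ^ 2 := by
    rw [norm_sq_P w, norm_sq_P z]
    refine norm_sq_le_of_coord v _ _ _ _ _ fun p => ?_
    rw [h1, h2]
    refine (norm_sq_two_by_two _ _ _ _ _).trans ?_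
    have := le_ciSup hbdd p
    gcongr
  have := Real.sqrt_le_sqrt key
  rwa [Real.sqrt_sq (norm_nonneg _), Real.sqrt_mul' _ (sq_nonneg _),
    Real.sqrt_sq (norm_nonneg _)] at this

/-- Coordinatewise row maps `(x, b) ↦ c x + d b` have norm at most `√(sup (c² + d²))`. -/
lemma norm_row_le (v : HilbertBasis ℕ ℝ H) (c d : ℕ → ℝ)
    (hc : BddSeq c) (hd : BddSeq d) (z : WithLp 2 (H × H)) (y : H)
    (h1 : ∀ p, inner ℝ (v p) y = c p * inner ℝ (v p) (fstL z)
      + d p * inner ℝ (v p) (sndL z)) :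
    ‖y‖ ≤ Real.sqrt (⨆ p : ℕ, (c p ^ 2 + d p ^ 2)) * ‖z‖ := by
  have key : ‖y‖ ^ 2 + ‖(0 : H)‖ ^ 2 ≤ (⨆ p : ℕ, (c p ^ 2 + d p ^ 2)) * ‖z‖ ^ 2 := by
    rw [norm_sq_P z]
    refine norm_sq_le_of_coord v _ _ _ _ _ fun p => ?_
    rw [h1, inner_zero_right, zero_pow two_ne_zero, add_zero]
    refine (sq_row_le _ _ _ _).trans ?_
    have := le_ciSup (hc.sq.add hd.sq).bddAbove p
    gcongr
  rw [norm_zero, zero_pow two_ne_zero, add_zero] at key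
  have := Real.sqrt_le_sqrt key
  rwa [Real.sqrt_sq (norm_nonneg _), Real.sqrt_mul' _ (sq_nonneg _),
    Real.sqrt_sq (norm_nonneg _)] at this

/-! ### Reflections and unrolling of the network -/

/-- For a firmly nonexpansive map, with `r`, `u` the differences of two outputs and of the two
inputs, the reflection `2 Q - Id` does not increase distances. -/
lemma norm_reflection_le (r u : H) (h : ‖r‖ ^ 2 + ‖u - r‖ ^ 2 ≤ ‖u‖ ^ 2) :
    ‖(2 : ℝ) • r - u‖ ≤ ‖u‖ := by
  have h1 := parallelogram_law_with_norm ℝ r (u - r)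
  have e1 : r + (u - r) = u := by abel
  have e2 : r - (u - r) = (2 : ℝ) • r - u := by rw [two_smul]; abel
  rw [e1, e2] at h1
  refine (sq_le_sq₀ (norm_nonneg _) (norm_nonneg _)).1 ?_
  nlinarith

lemma norm_Qop_reflection_le (R : ℕ → H → H) (n : ℕ)
    (hR : ∀ x y : H, ‖R n x - R n y‖ ^ 2 + ‖(x - R n x) - (y - R n y)‖ ^ 2 ≤ ‖x - y‖ ^ 2)
    (z z' : WithLp 2 (H × H)) :
    ‖(2 : ℝ) • (Qop R n z - Qop R n z') - (z - z')‖ ≤ ‖z - z'‖ := by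
  have h1 : ‖(2 : ℝ) • (R n (fstL z) - R n (fstL z')) - (fstL z - fstL z')‖
      ≤ ‖fstL z - fstL z'‖ := by
    apply norm_reflection_le
    have := hR (fstL z) (fstL z')
    rwa [sub_sub_sub_comm] at this
  have e1 : fstL ((2 : ℝ) • (Qop R n z - Qop R n z') - (z - z'))
      = (2 : ℝ) • (R n (fstL z) - R n (fstL z')) - (fstL z - fstL z') := by
    simp only [map_sub, map_smul]; rfl
  have e2 : sndL ((2 : ℝ) • (Qop R n z - Qop R n z') - (z - z')) = sndL (z - z') := by
    have : sndL ((2 : ℝ) • (Qop R n z - Qop R n z') - (z - z'))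
      = (2 : ℝ) • (sndL z - sndL z') - (sndL z - sndL z') := by
      simp only [map_sub, map_smul]; rfl
    rw [this, map_sub, two_smul]; abel
  refine (sq_le_sq₀ (norm_nonneg _) (norm_nonneg _)).1 ?_
  rw [norm_sq_P, norm_sq_P (z - z'), e1, e2, map_sub fstL]
  gcongr

/-- The defect `s₀ = x₀`, `sₙ = 2ⁿ xₙ - Uₙ (2ⁿ⁻¹ xₙ₋₁)` of a sequence with respect to the linear
recursion `2ⁿ xₙ = Uₙ (2ⁿ⁻¹ xₙ₋₁)`. -/
def defect {E : Type*} [NormedAddCommGroup E] [NormedSpace ℝ E]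
    (A : ℕ → E →L[ℝ] E) (x : ℕ → E) : ℕ → E
  | 0 => x 0
  | n + 1 => (2 : ℝ) ^ (n + 1) • x (n + 1) - A (n + 1) ((2 : ℝ) ^ n • x n)

lemma unroll {E : Type*} [NormedAddCommGroup E] [NormedSpace ℝ E]
    (A : ℕ → E →L[ℝ] E) (x : ℕ → E) (n : ℕ) :
    A (n + 1) ((2 : ℝ) ^ n • x n)
      = ∑ i ∈ Finset.Icc 1 (n + 1), opComp A i (n + 1) (defect A x (i - 1)) := by
  induction n with
  | zero => simp [defect, opComp_self]
  | succ n ih =>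
    have e : (2 : ℝ) ^ (n + 1) • x (n + 1)
        = defect A x (n + 1) + A (n + 1) ((2 : ℝ) ^ n • x n) := by
      simp [defect]
    rw [e, ih, map_add, map_sum, Finset.sum_Icc_succ_top (by omega : 1 ≤ n + 1 + 1), add_comm,
      opComp_self _ (by omega)]
    congr 1
    refine Finset.sum_congr rfl fun i hi => ?_
    rw [Finset.mem_Icc] at hi
    rw [opComp_succ A (n := n + 1) (by omega)]

theorem statement12 (m : ℕ) (hm : 1 ≤ m) [CompleteSpace H]
    (v : HilbertBasis ℕ ℝ H)
    (W : ℕ → H →L[ℝ] H) (beta : ℕ → ℕ → ℝ) (lam eta : ℕ → ℝ)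
    (hW : ∀ n, 1 ≤ n → n ≤ m → ∀ p : ℕ, W n (v p) = beta n p • v p)
    (hlam : ∀ n, 1 ≤ n → n ≤ m → 0 < lam n)
    (heta : ∀ n, 1 ≤ n → n ≤ m → 0 < eta n)
    (hm2 : 2 ≤ m)
    (R : ℕ → H → H)
    (hR : ∀ n, 1 ≤ n → n ≤ m → ∀ x y : H,
      ‖R n x - R n y‖ ^ 2 + ‖(x - R n x) - (y - R n y)‖ ^ 2 ≤ ‖x - y‖ ^ 2)
    (θ : ℕ → ℝ) (hθ0 : θ 0 = 1)
    (hθ : ∀ n, 1 ≤ n → n ≤ m - 1 →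
      θ n = ∑ i ∈ Finset.Icc 1 n, θ (i - 1) * Real.sqrt (aC beta lam eta i n))
    (θbar : ℝ)
    (hθbar : θbar = ∑ i ∈ Finset.Icc 1 m, θ (i - 1) * Real.sqrt (aBar beta lam eta i m))
    (α : ℝ) (hα : 1 / 2 ≤ α) (hα1 : α ≤ 1)
    (bbarα : ℝ)
    (hbbarα : bbarα = (1 / 2) * ⨆ p : ℕ,
      ((betaC beta 1 m p - 2 ^ m * (1 - α)) ^ 2 + betaT beta lam eta 1 m p ^ 2
          + (2 ^ m * (1 - α)) ^ 2
        + Real.sqrt (((betaC beta 1 m p - 2 ^ m * (1 - α)) ^ 2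
              + betaT beta lam eta 1 m p ^ 2 + (2 ^ m * (1 - α)) ^ 2) ^ 2
            - 4 * (betaC beta 1 m p - 2 ^ m * (1 - α)) ^ 2 * (2 ^ m * (1 - α)) ^ 2)))
    (hcond : Real.sqrt bbarα - Real.sqrt (aBar beta lam eta 1 m) ≤ 2 ^ m * α - 2 * θbar) :
    ∃ Rm : WithLp 2 (H × H) → WithLp 2 (H × H),
      (∀ z z' : WithLp 2 (H × H), ‖Rm z - Rm z'‖ ≤ ‖z - z'‖) ∧
      ∀ z : WithLp 2 (H × H),
        mkP (R m (Ubar W lam m (net (Uop W lam eta) (Qop R) (m - 1) z))) 0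
          = (1 - α) • z + α • Rm z := by
  have hb : ∀ n, 1 ≤ n → n ≤ m → BddSeq (beta n) := fun n h1 h2 =>
    ⟨‖W n‖, abs_diag_le v (W n) (beta n) (hW n h1 h2)⟩
  have hUnorm : ∀ i n, 1 ≤ i → i ≤ n → n ≤ m → ∀ z,
      ‖opComp (Uop W lam eta) i n z‖ ≤ Real.sqrt (aC beta lam eta i n) * ‖z‖ := by
    intro i n hi hin hnm z
    obtain ⟨hc, hd⟩ := bddSeq_betaC_betaT beta lam eta hb hi hin hnm
    refine norm_triangular_le v _ _ _ hc hd z _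
      (inner_fstL_opComp v W beta lam eta hW hi hin hnm z) fun p => ?_
    rw [sndL_opComp _ _ _ hi hin, real_inner_smul_right]
  have hUbar : ∀ i, 1 ≤ i → i ≤ m → ∀ z,
      ‖fstL (opComp (Uop W lam eta) i m z)‖ ≤ Real.sqrt (aBar beta lam eta i m) * ‖z‖ := by
    intro i hi him z
    obtain ⟨hc, hd⟩ := bddSeq_betaC_betaT beta lam eta hb hi him le_rfl
    exact norm_row_le v _ _ hc hd z _ (inner_fstL_opComp v W beta lam eta hW hi him le_rfl z)
  have hshift : ∀ z, ‖mkP (fstL (opComp (Uop W lam eta) 1 m z)) 0 - ((2 : ℝ) ^ m * (1 - α)) • z‖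
      ≤ Real.sqrt bbarα * ‖z‖ := by
    intro z
    obtain ⟨hc, hd⟩ := bddSeq_betaC_betaT beta lam eta hb le_rfl hm le_rfl
    rw [hbbarα]
    refine norm_triangular_le v (fun p => betaC beta 1 m p - 2 ^ m * (1 - α)) _ _ ?_ hd z _ ?_ ?_
    · simpa only [sub_eq_add_neg] using hc.add (BddSeq.const (-(2 ^ m * (1 - α))))
    · intro p
      rw [map_sub, map_smul, fstL_mkP, inner_sub_right, real_inner_smul_right,
        inner_fstL_opComp v W beta lam eta hW le_rfl hm le_rfl]
      ring
    · intro p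
      rw [map_sub, map_smul, sndL_mkP, inner_sub_right, real_inner_smul_right, inner_zero_right]
      ring
  obtain ⟨N, hN⟩ : ∃ N : WithLp 2 (H × H) → WithLp 2 (H × H), N = fun z =>
      mkP (R m (Ubar W lam m (net (Uop W lam eta) (Qop R) (m - 1) z))) 0 := ⟨_, rfl⟩
  have hα0 : 0 < α := by linarith
  suffices hmain : ∀ z z', ‖N z - N z' - (1 - α) • (z - z')‖ ≤ α * ‖z - z'‖ by
    refine ⟨fun z => α⁻¹ • (N z - (1 - α) • z), fun z z' => ?_, fun z => ?_⟩
    · have e : α⁻¹ • (N z - (1 - α) • z) - α⁻¹ • (N z' - (1 - α) • z')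
          = α⁻¹ • (N z - N z' - (1 - α) • (z - z')) := by module
      rw [e, norm_smul, Real.norm_eq_abs, abs_of_pos (inv_pos.2 hα0), inv_mul_le_iff₀ hα0]
      exact hmain z z'
    · rw [smul_inv_smul₀ hα0.ne', add_sub_cancel, hN]
  intro z z'
  obtain ⟨k, rfl⟩ := Nat.exists_eq_add_of_le' hm
  simp only [Nat.add_sub_cancel] at hN hθ
  set U := Uop W lam eta with hU
  obtain ⟨x, hx⟩ : ∃ x : ℕ → WithLp 2 (H × H), ∀ n, x n = net U (Qop R) n z - net U (Qop R) n z' :=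
    ⟨_, fun n => rfl⟩
  have hx0 : x 0 = z - z' := hx 0
  have hs0 : defect U x 0 = z - z' := hx0
  have hdef : ∀ n, n + 1 ≤ k → ‖defect U x (n + 1)‖ ≤ ‖U (n + 1) ((2 : ℝ) ^ n • x n)‖ := by
    intro n hn
    have h := norm_Qop_reflection_le R (n + 1) (hR (n + 1) (by omega) (by omega))
      (U (n + 1) (net U (Qop R) n z)) (U (n + 1) (net U (Qop R) n z'))
    rw [← map_sub, ← hx n] at h
    have e : defect U x (n + 1) = (2 : ℝ) ^ n • ((2 : ℝ) • x (n + 1) - U (n + 1) (x n)) := by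
      simp only [defect, map_smul, pow_succ]; module
    rw [e, map_smul, norm_smul, norm_smul, hx (n + 1)]
    exact mul_le_mul_of_nonneg_left h (norm_nonneg _)
  have hθs : ∀ n, n ≤ k → ‖defect U x n‖ ≤ θ n * ‖z - z'‖ := by
    intro n
    induction n using Nat.strong_induction_on with
    | _ n ih =>
      intro hn
      rcases n with _ | n
      · rw [hs0, hθ0, one_mul]
      · refine (hdef n hn).trans ?_
        rw [unroll, hθ (n + 1) (by omega) hn, Finset.sum_mul]
        refine norm_sum_le_of_le _ fun i hi => ?_
        rw [Finset.mem_Icc] at hi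
        refine (hUnorm i (n + 1) hi.1 hi.2 (by omega) _).trans ?_
        have := ih (i - 1) (by omega) (by omega)
        calc _ ≤ Real.sqrt (aC beta lam eta i (n + 1)) * (θ (i - 1) * ‖z - z'‖) := by gcongr
          _ = _ := by ring
  have hterm : ∀ i ∈ Finset.Icc 1 (k + 1), ‖fstL (opComp U i (k + 1) (defect U x (i - 1)))‖
      ≤ θ (i - 1) * Real.sqrt (aBar beta lam eta i (k + 1)) * ‖z - z'‖ := by
    intro i hi
    rw [Finset.mem_Icc] at hi
    refine (hUbar i hi.1 hi.2 _).trans ?_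
    have := hθs (i - 1) (by omega)
    calc _ ≤ Real.sqrt (aBar beta lam eta i (k + 1)) * (θ (i - 1) * ‖z - z'‖) := by gcongr
      _ = _ := by ring
  -- The part of the final pre-activation that involves at least one reflection.
  obtain ⟨t, ht⟩ : ∃ t : H, t = ∑ i ∈ Finset.Icc 2 (k + 1),
    fstL (opComp U i (k + 1) (defect U x (i - 1))) := ⟨_, rfl⟩
  have hIcc : Finset.Icc 1 (k + 1) = insert 1 (Finset.Icc 2 (k + 1)) := by
    ext j; simp only [Finset.mem_insert, Finset.mem_Icc]; omega
  have h1not : 1 ∉ Finset.Icc 2 (k + 1) := by simp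
  have hu : fstL (U (k + 1) ((2 : ℝ) ^ k • x k)) = fstL (opComp U 1 (k + 1) (z - z')) + t := by
    rw [unroll, map_sum, hIcc, Finset.sum_insert h1not, ht, Nat.sub_self, hs0]
  have hu_le : ‖fstL (U (k + 1) ((2 : ℝ) ^ k • x k))‖ ≤ θbar * ‖z - z'‖ := by
    rw [unroll, map_sum, hθbar, Finset.sum_mul]
    exact norm_sum_le_of_le _ hterm
  have ht_le : ‖t‖ ≤ (θbar - Real.sqrt (aBar beta lam eta 1 (k + 1))) * ‖z - z'‖ := by
    have e : θbar - Real.sqrt (aBar beta lam eta 1 (k + 1)) = ∑ i ∈ Finset.Icc 2 (k + 1),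
        θ (i - 1) * Real.sqrt (aBar beta lam eta i (k + 1)) := by
      rw [hθbar, hIcc, Finset.sum_insert h1not, Nat.sub_self, hθ0]; ring
    rw [e, ht, Finset.sum_mul]
    refine norm_sum_le_of_le _ fun i hi => hterm i ?_
    rw [hIcc]; exact Finset.mem_insert_of_mem hi
  obtain ⟨y, hy⟩ : ∃ y : H, y = R (k + 1) (Ubar W lam (k + 1) (net U (Qop R) k z))
    - R (k + 1) (Ubar W lam (k + 1) (net U (Qop R) k z')) := ⟨_, rfl⟩
  have hNy : N z - N z' = mkP y 0 := by
    rw [hN, hy]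
    apply ext_P
    · simp only [map_sub, fstL_mkP]
    · simp only [map_sub, sndL_mkP, sub_self]
  have hrefl : ‖(2 : ℝ) • y - fstL (U (k + 1) (x k))‖ ≤ ‖fstL (U (k + 1) (x k))‖ := by
    apply norm_reflection_le
    have h := hR (k + 1) (by omega) le_rfl (Ubar W lam (k + 1) (net U (Qop R) k z))
      (Ubar W lam (k + 1) (net U (Qop R) k z'))
    have e : Ubar W lam (k + 1) (net U (Qop R) k z) - Ubar W lam (k + 1) (net U (Qop R) k z')
        = fstL (U (k + 1) (x k)) := by
      rw [hx, map_sub, map_sub]; rfl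
    rwa [sub_sub_sub_comm, e, ← hy] at h
  obtain ⟨s, hs⟩ : ∃ s : H, s = (2 : ℝ) ^ (k + 1) • y - fstL (U (k + 1) ((2 : ℝ) ^ k • x k)) :=
    ⟨_, rfl⟩
  have hs_le : ‖s‖ ≤ θbar * ‖z - z'‖ := by
    refine le_trans ?_ hu_le
    have e : s = (2 : ℝ) ^ k • ((2 : ℝ) • y - fstL (U (k + 1) (x k))) := by
      rw [hs, map_smul, map_smul, pow_succ]; module
    rw [e, map_smul, map_smul, norm_smul, norm_smul]
    exact mul_le_mul_of_nonneg_left hrefl (norm_nonneg _)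
  have hmk : ∀ w : H, ‖mkP w 0‖ = ‖w‖ := by
    intro w
    have h := norm_sq_P (mkP w 0)
    rw [fstL_mkP, sndL_mkP, norm_zero, zero_pow two_ne_zero, add_zero] at h
    exact (sq_eq_sq₀ (norm_nonneg _) (norm_nonneg _)).1 h
  have hdecomp : (2 : ℝ) ^ (k + 1) • (N z - N z' - (1 - α) • (z - z'))
      = (mkP (fstL (opComp U 1 (k + 1) (z - z'))) 0 - ((2 : ℝ) ^ (k + 1) * (1 - α)) • (z - z'))
        + mkP t 0 + mkP s 0 := by
    have e : (2 : ℝ) ^ (k + 1) • y = fstL (opComp U 1 (k + 1) (z - z')) + t + s := by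
      rw [hs, hu]; abel
    have e' : (2 : ℝ) ^ (k + 1) • mkP y 0
        = mkP (fstL (opComp U 1 (k + 1) (z - z'))) 0 + mkP t 0 + mkP s 0 := by
      apply ext_P
      · simp only [map_smul, map_add, fstL_mkP]; exact e
      · simp only [map_smul, map_add, sndL_mkP, smul_zero, add_zero]
    rw [smul_sub, hNy, e', smul_smul]; abel
  have hfin : (2 : ℝ) ^ (k + 1) * ‖N z - N z' - (1 - α) • (z - z')‖
      ≤ (2 : ℝ) ^ (k + 1) * (α * ‖z - z'‖) := by
    have hn : ‖(2 : ℝ) ^ (k + 1) • (N z - N z' - (1 - α) • (z - z'))‖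
        = (2 : ℝ) ^ (k + 1) * ‖N z - N z' - (1 - α) • (z - z')‖ := by
      rw [norm_smul, Real.norm_eq_abs, abs_of_pos (by positivity)]
    rw [← hn, hdecomp]
    refine (norm_add₃_le).trans ?_
    rw [hmk, hmk]
    have h1 := hshift (z - z')
    have h2 := mul_le_mul_of_nonneg_right hcond (norm_nonneg (z - z'))
    linarith
  exact le_of_mul_le_mul_left hfin (by positivity)
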